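/- Variance estimate, diagonal part (Lemma 4.6, first part): fix θ with −√2 < θ < √2 and R ∈ ℕ. With x_θ^N = x/N + θ and T^N_{r,∞}(x) = { y ∈ ℝ : r/N ≤ |x_θ^N − y| }, one has lim_{r→∞} limsup_{N→∞} sup_{|x| < R} ∫_{T^N_{r,∞}(x)} L^N(y,y) / ( N |x_θ^N − y|² ) dy = 0. -/

import Mathlib

open Real MeasureTheory Filter Set

/-- Physicists' Hermite polynomial `H_n(x) = (-1)^n e^{x^2} (d/dx)^n e^{-x^2}`. -/
noncomputable def hermiteP (n : ℕ) (x : ℝ) : ℝ :=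
  (-1 : ℝ) ^ n * Real.exp (x ^ 2) * iteratedDeriv n (fun t => Real.exp (-t ^ 2)) x

/-- Oscillator wave function `ψ_n(x) = (√π 2^n n!)^{-1/2} e^{-x^2/2} H_n(x)`. -/
noncomputable def osc (n : ℕ) (x : ℝ) : ℝ :=
  (Real.sqrt (Real.sqrt Real.pi * 2 ^ n * (n.factorial : ℝ)))⁻¹ *
    Real.exp (-x ^ 2 / 2) * hermiteP n x

/-- The kernel `K^N(x,y) = Σ_{k=0}^{N-1} ψ_k(x) ψ_k(y)`. -/
noncomputable def kerK (N : ℕ) (x y : ℝ) : ℝ :=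
  ∑ k ∈ Finset.range N, osc k x * osc k y

/-- The rescaled kernel `L^N(x,y) = N^{-1/2} K^N(√N x, √N y)`. -/
noncomputable def kerL (N : ℕ) (x y : ℝ) : ℝ :=
  (Real.sqrt (N : ℝ))⁻¹ * kerK N (Real.sqrt (N : ℝ) * x) (Real.sqrt (N : ℝ) * y)

/-!
Differentiating the diagonal kernel `K^N(x, x) = ∑ k < N, ψ_k(x)²` with the ladder relations for
`ψ_k` telescopes to `-√(2N) ψ_{N-1}(x) ψ_N(x)`. Since `‖ψ_k‖₂ = 1`, this derivative has `L¹` norm at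
most `√(2N)`, which therefore bounds `K^N(x, x)`, so that `L^N(y, y) ≤ √2` uniformly in `y` and `N`.
The integral in question is then at most `N⁻¹ √2 ∫_{|u| ≥ r/N} u⁻² du = 2√2 / r`.
-/

open Polynomial (aeval derivative hermite hermite_succ hermite_zero aeval_X aeval_monomial
  deriv_gaussian_eq_hermite_mul_gaussian)
open scoped Polynomial

theorem derivative_hermite_succ (n : ℕ) :
    derivative (hermite (n + 1)) = ((n : ℤ[X]) + 1) * hermite n := by
  induction n with
  | zero => simp
  | succ n ih =>
    have ih' : derivative (derivative (hermite (n + 1))) =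
        ((n : ℤ[X]) + 1) * derivative (hermite n) := by
      rw [ih, ← Nat.cast_succ, Polynomial.derivative_natCast_mul]
    rw [hermite_succ (n + 1), Polynomial.derivative_sub, Polynomial.derivative_mul,
      Polynomial.derivative_X, ih', ih, hermite_succ n]
    push_cast
    ring

theorem integrable_aeval_mul_exp_neg_mul_sq {R : Type*} [CommSemiring R] [Algebra R ℝ] {b : ℝ}
    (hb : 0 < b) (p : R[X]) : Integrable fun x : ℝ => aeval x p * exp (-b * x ^ 2) := by
  induction p using Polynomial.induction_on' with
  | add p q hp hq =>
    simp only [map_add, add_mul]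
    exact hp.add hq
  | monomial n a =>
    have hn : (-1 : ℝ) < n := neg_one_lt_zero.trans_le n.cast_nonneg
    simpa only [aeval_monomial, mul_assoc, Real.rpow_natCast] using
      (integrable_rpow_mul_exp_neg_mul_sq hb hn).const_mul (algebraMap R ℝ a)

theorem norm_le_integral_norm_of_hasDerivAt {E : Type*} [NormedAddCommGroup E] [NormedSpace ℝ E]
    [CompleteSpace E] {f f' : ℝ → E} (hderiv : ∀ x, HasDerivAt f (f' x) x) (hf : Integrable f)
    (hf' : Integrable f') (a : ℝ) : ‖f a‖ ≤ ∫ x, ‖f' x‖ := by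
  have hlim := tendsto_zero_of_hasDerivAt_of_integrableOn_Iic (a := a) (fun x _ => hderiv x)
    hf'.integrableOn hf.integrableOn
  have hftc := integral_Iic_of_hasDerivAt_of_tendsto' (a := a) (fun x _ => hderiv x)
    hf'.integrableOn hlim
  calc ‖f a‖ = ‖∫ x in Iic a, f' x‖ := by rw [hftc, sub_zero]
    _ ≤ ∫ x in Iic a, ‖f' x‖ := norm_integral_le_integral_norm _
    _ ≤ ∫ x, ‖f' x‖ := setIntegral_le_integral hf'.norm (.of_forall fun x => norm_nonneg _)

section Tail

variable {ρ s : ℝ}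

theorem setIntegral_abs_sub_rpow_of_lt (hρ : 0 < ρ) (hs : s < -1) (a : ℝ) :
    ∫ y in {y | ρ ≤ |a - y|}, |a - y| ^ s = 2 * (-ρ ^ (s + 1) / (s + 1)) := by
  have hmeas : MeasurableSet {y | ρ ≤ |a - y|} := measurableSet_le (by fun_prop) (by fun_prop)
  calc ∫ y in {y | ρ ≤ |a - y|}, |a - y| ^ s
      = ∫ y, (Ici ρ).indicator (· ^ s) |a - y| := (integral_indicator hmeas).symm
    _ = ∫ u, (Ici ρ).indicator (· ^ s) |u| :=
        integral_sub_left_eq_self (fun u => (Ici ρ).indicator (· ^ s) |u|) volume a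
    _ = 2 * ∫ t in Ioi 0, (Ici ρ).indicator (· ^ s) t := integral_comp_abs
    _ = 2 * ∫ t in Ioi ρ, t ^ s := by
        rw [setIntegral_indicator measurableSet_Ici,
          inter_eq_right.2 (Ici_subset_Ioi.2 hρ), integral_Ici_eq_integral_Ioi]
    _ = 2 * (-ρ ^ (s + 1) / (s + 1)) := by rw [integral_Ioi_rpow_of_lt hs hρ]

theorem integrableOn_abs_sub_rpow_of_lt (hρ : 0 < ρ) (hs : s < -1) (a : ℝ) :
    IntegrableOn (fun y => |a - y| ^ s) {y | ρ ≤ |a - y|} := by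
  have hvalue : 0 < 2 * (-ρ ^ (s + 1) / (s + 1)) := mul_pos two_pos <|
    div_pos_of_neg_of_neg (neg_neg_of_pos (Real.rpow_pos_of_pos hρ _)) (by linarith)
  -- Were it not integrable, its integral would be the junk value `0`.
  by_contra hnot
  exact hvalue.ne ((integral_undef hnot).symm.trans (setIntegral_abs_sub_rpow_of_lt hρ hs a))

theorem abs_setIntegral_div_abs_sub_sq_le {f : ℝ → ℝ} {C : ℝ} (hf : ∀ y, |f y| ≤ C) (hρ : 0 < ρ)
    (a : ℝ) : |∫ y in {y | ρ ≤ |a - y|}, f y / |a - y| ^ 2| ≤ 2 * C / ρ := by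
  have hs : (-2 : ℝ) < -1 := by norm_num
  calc |∫ y in {y | ρ ≤ |a - y|}, f y / |a - y| ^ 2|
      ≤ ∫ y in {y | ρ ≤ |a - y|}, C * |a - y| ^ (-2 : ℝ) := by
        rw [← Real.norm_eq_abs]
        refine norm_integral_le_of_norm_le
          ((integrableOn_abs_sub_rpow_of_lt hρ hs a).const_mul C) (.of_forall fun y => ?_)
        rw [Real.rpow_neg (abs_nonneg _), Real.rpow_two, ← div_eq_mul_inv, norm_div, norm_pow,
          Real.norm_eq_abs, Real.norm_eq_abs, abs_abs]
        gcongr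
        exact hf y
    _ = 2 * C / ρ := by
        rw [integral_const_mul, setIntegral_abs_sub_rpow_of_lt hρ hs]
        rw [show (-2 : ℝ) + 1 = -1 by norm_num, Real.rpow_neg_one]
        ring

end Tail

theorem hermiteP_eq_aeval_hermite (n : ℕ) (x : ℝ) :
    hermiteP n x = √2 ^ n * aeval (√2 * x) (hermite n) := by
  have hscale : (fun t : ℝ => exp (-t ^ 2)) = fun t => exp (-((√2 * t) ^ 2 / 2)) := by
    ext t
    simp [mul_pow]
  have hsmooth : ContDiff ℝ n fun t : ℝ => exp (-(t ^ 2 / 2)) := by fun_prop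
  rw [hermiteP, hscale, iteratedDeriv_comp_const_mul hsmooth, iteratedDeriv_eq_iterate]
  beta_reduce
  rw [deriv_gaussian_eq_hermite_mul_gaussian]
  have hsign : (-1 : ℝ) ^ n * (-1) ^ n = 1 := by simp [← mul_pow]
  have hexp : exp (x ^ 2) * exp (-((√2 * x) ^ 2 / 2)) = 1 := by
    rw [← Real.exp_add]
    simp [mul_pow]
  linear_combination √2 ^ n * aeval (√2 * x) (hermite n) *
    (exp (x ^ 2) * exp (-((√2 * x) ^ 2 / 2)) * hsign + hexp)

theorem hasDerivAt_hermiteP (n : ℕ) (x : ℝ) :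
    HasDerivAt (hermiteP n) (√2 ^ (n + 1) * aeval (√2 * x) (derivative (hermite n))) x := by
  rw [funext (hermiteP_eq_aeval_hermite n)]
  have hinner : HasDerivAt (fun t => √2 * t) √2 x := by
    simpa using (hasDerivAt_id x).const_mul √2
  convert! ((Polynomial.hasDerivAt_aeval (hermite n) (√2 * x)).comp x hinner).const_mul
    (√2 ^ n) using 1
  ring

theorem hasDerivAt_hermiteP_raising (n : ℕ) (x : ℝ) :
    HasDerivAt (hermiteP n) (2 * x * hermiteP n x - hermiteP (n + 1) x) x := by
  convert! hasDerivAt_hermiteP n x using 1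
  simp only [hermiteP_eq_aeval_hermite, hermite_succ, map_sub, map_mul, aeval_X]
  linear_combination -(√2 ^ n * x * aeval (√2 * x) (hermite n)) * Real.sq_sqrt zero_le_two

theorem hasDerivAt_hermiteP_lowering (n : ℕ) (x : ℝ) :
    HasDerivAt (hermiteP n) (2 * n * hermiteP (n - 1) x) x := by
  convert! hasDerivAt_hermiteP n x using 1
  cases n with
  | zero => simp
  | succ n =>
    simp only [hermiteP_eq_aeval_hermite, derivative_hermite_succ, map_mul, map_add, map_natCast,
      map_one, Nat.add_sub_cancel]
    push_cast
    linear_combination -(√2 ^ n * (n + 1) * aeval (√2 * x) (hermite n)) *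
      Real.sq_sqrt zero_le_two

/-- The constant `(√π 2^n n!)^{-1/2}` normalising `osc n` in `L²`. -/
noncomputable def oscNormalization (n : ℕ) : ℝ :=
  (√(√π * 2 ^ n * n.factorial))⁻¹

theorem osc_eq (n : ℕ) (x : ℝ) :
    osc n x = oscNormalization n * exp (-x ^ 2 / 2) * hermiteP n x := rfl

theorem oscNormalization_eq_mul_succ (n : ℕ) :
    oscNormalization n = √(2 * (n + 1 : ℕ)) * oscNormalization (n + 1) := by
  have hfactor : √π * 2 ^ (n + 1) * (n + 1).factorial =
      2 * (n + 1 : ℕ) * (√π * 2 ^ n * n.factorial) := by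
    rw [Nat.factorial_succ]
    push_cast
    ring
  rw [oscNormalization, oscNormalization, hfactor,
    Real.sqrt_mul (by positivity) (√π * 2 ^ n * n.factorial), mul_inv,
    mul_inv_cancel_left₀ (by positivity)]

theorem hasDerivAt_osc_of_hermiteP {n : ℕ} {x h' : ℝ} (h : HasDerivAt (hermiteP n) h' x) :
    HasDerivAt (osc n) (oscNormalization n * exp (-x ^ 2 / 2) * h' - x * osc n x) x := by
  have hexponent : HasDerivAt (fun t : ℝ => -t ^ 2 / 2) (-x) x := by
    convert! ((hasDerivAt_pow 2 x).neg).div_const 2 using 1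
    push_cast
    ring
  convert! (hexponent.exp.const_mul (oscNormalization n)).mul h using 1
  simp only [osc_eq]
  ring

theorem hasDerivAt_osc_raising (n : ℕ) (x : ℝ) :
    HasDerivAt (osc n) (x * osc n x - √(2 * (n + 1 : ℕ)) * osc (n + 1) x) x := by
  convert! hasDerivAt_osc_of_hermiteP (hasDerivAt_hermiteP_raising n x) using 1
  simp only [osc_eq, oscNormalization_eq_mul_succ n]
  ring

-- At `n = 0` the truncated index `n - 1` is harmless, since the coefficient `√(2 * 0)` vanishes.
theorem hasDerivAt_osc_lowering (n : ℕ) (x : ℝ) :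
    HasDerivAt (osc n) (√(2 * n) * osc (n - 1) x - x * osc n x) x := by
  convert! hasDerivAt_osc_of_hermiteP (hasDerivAt_hermiteP_lowering n x) using 2
  cases n with
  | zero => simp
  | succ n =>
    have hsq := Real.mul_self_sqrt (show (0 : ℝ) ≤ 2 * (n + 1 : ℕ) by positivity)
    simp only [osc_eq, Nat.add_sub_cancel, oscNormalization_eq_mul_succ n]
    linear_combination oscNormalization (n + 1) * exp (-x ^ 2 / 2) * hermiteP n x * hsq

theorem hasDerivAt_osc_mul_self (n : ℕ) (x : ℝ) :
    HasDerivAt (fun t => osc n t * osc n t)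
      (√(2 * n) * (osc (n - 1) x * osc n x) -
        √(2 * (n + 1 : ℕ)) * (osc n x * osc (n + 1) x)) x := by
  convert! (hasDerivAt_osc_raising n x).mul (hasDerivAt_osc_lowering n x) using 1
  ring

theorem hasDerivAt_osc_mul_osc_succ (n : ℕ) (x : ℝ) :
    HasDerivAt (fun t => osc n t * osc (n + 1) t)
      (√(2 * (n + 1 : ℕ)) * (osc n x * osc n x - osc (n + 1) x * osc (n + 1) x)) x := by
  convert! (hasDerivAt_osc_raising n x).mul (hasDerivAt_osc_lowering (n + 1) x) using 1
  rw [Nat.add_sub_cancel]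
  ring

theorem hasDerivAt_kerK_self (N : ℕ) (x : ℝ) :
    HasDerivAt (fun t => kerK N t t) (-(√(2 * N) * (osc (N - 1) x * osc N x))) x := by
  convert! HasDerivAt.fun_sum (u := Finset.range N) fun k _ => hasDerivAt_osc_mul_self k x using 1
  simpa using (Finset.sum_range_sub' (fun k : ℕ => √(2 * k) * (osc (k - 1) x * osc k x)) N).symm

theorem integrable_osc_mul_osc (m n : ℕ) : Integrable fun x => osc m x * osc n x := by
  have hscaled := (integrable_aeval_mul_exp_neg_mul_sq one_half_pos
    (hermite m * hermite n)).comp_mul_left' (R := √2) (by positivity)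
  refine (hscaled.const_mul (oscNormalization m * oscNormalization n *
    (√2 ^ m * √2 ^ n))).congr (.of_forall fun x => ?_)
  have hexp : exp (-(1 / 2) * (√2 * x) ^ 2) = exp (-x ^ 2 / 2) * exp (-x ^ 2 / 2) := by
    rw [← Real.exp_add, mul_pow, Real.sq_sqrt zero_le_two]
    ring_nf
  simp only [osc_eq, hermiteP_eq_aeval_hermite, map_mul, hexp]
  ring

theorem integral_osc_zero_mul_self : ∫ x, osc 0 x * osc 0 x = 1 := by
  have hgaussian (x : ℝ) : osc 0 x * osc 0 x = (√π)⁻¹ * exp (-1 * x ^ 2) := by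
    have hexp : exp (-1 * x ^ 2) = exp (-x ^ 2 / 2) * exp (-x ^ 2 / 2) := by
      rw [← Real.exp_add]
      ring_nf
    have hconst : oscNormalization 0 * oscNormalization 0 = (√π)⁻¹ := by
      simp [oscNormalization, ← mul_inv]
    simp only [osc_eq, hermiteP_eq_aeval_hermite, hermite_zero, hexp, ← hconst, pow_zero, map_one]
    ring
  simp_rw [hgaussian]
  rw [integral_const_mul, integral_gaussian, div_one]
  exact inv_mul_cancel₀ (by positivity)

theorem integral_osc_mul_self (n : ℕ) : ∫ x, osc n x * osc n x = 1 := by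
  induction n with
  | zero => exact integral_osc_zero_mul_self
  | succ n ih =>
    have hint (k : ℕ) := integrable_osc_mul_osc k k
    have hzero := integral_eq_zero_of_hasDerivAt_of_integrable (hasDerivAt_osc_mul_osc_succ n)
      (((hint n).sub (hint (n + 1))).const_mul _) (integrable_osc_mul_osc n (n + 1))
    rw [integral_const_mul, integral_sub (hint n) (hint (n + 1)), ih] at hzero
    have hcoeff : √(2 * (n + 1 : ℕ)) ≠ 0 := by positivity
    exact (sub_eq_zero.1 ((mul_eq_zero.1 hzero).resolve_left hcoeff)).symm

theorem integral_norm_osc_mul_osc_le_one (m n : ℕ) : ∫ x, ‖osc m x * osc n x‖ ≤ 1 := by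
  have hint (k : ℕ) := integrable_osc_mul_osc k k
  calc ∫ x, ‖osc m x * osc n x‖
      ≤ ∫ x, (osc m x * osc m x + osc n x * osc n x) / 2 := by
        refine integral_mono (integrable_osc_mul_osc m n).norm
          (((hint m).add (hint n)).div_const 2) fun x => ?_
        have hamgm := two_mul_le_add_sq |osc m x| |osc n x|
        simp only [sq_abs] at hamgm
        rw [Real.norm_eq_abs, abs_mul]
        linarith
    _ = 1 := by
        rw [integral_div, integral_add (hint m) (hint n), integral_osc_mul_self,
          integral_osc_mul_self]
        norm_num

theorem abs_kerK_self_le (N : ℕ) (x : ℝ) : |kerK N x x| ≤ √(2 * N) := by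
  have hker : Integrable fun t => kerK N t t :=
    integrable_finsetSum _ fun k _ => integrable_osc_mul_osc k k
  have hderiv : Integrable fun t => -(√(2 * N) * (osc (N - 1) t * osc N t)) :=
    ((integrable_osc_mul_osc (N - 1) N).const_mul _).neg
  calc |kerK N x x|
      ≤ ∫ t, ‖-(√(2 * N) * (osc (N - 1) t * osc N t))‖ :=
        norm_le_integral_norm_of_hasDerivAt (hasDerivAt_kerK_self N) hker hderiv x
    _ = √(2 * N) * ∫ t, ‖osc (N - 1) t * osc N t‖ := by
        simp only [norm_neg, norm_mul √(2 * N : ℝ), integral_const_mul,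
          Real.norm_of_nonneg (Real.sqrt_nonneg _)]
    _ ≤ √(2 * N) := mul_le_of_le_one_right (Real.sqrt_nonneg _)
        (integral_norm_osc_mul_osc_le_one _ _)

theorem abs_kerL_self_le (N : ℕ) (y : ℝ) : |kerL N y y| ≤ √2 := by
  rw [kerL, abs_mul, abs_of_nonneg (by positivity)]
  refine inv_mul_le_of_le_mul₀ (by positivity) (by positivity) ?_
  rw [mul_comm √(N : ℝ) √2, ← Real.sqrt_mul zero_le_two]
  exact abs_kerK_self_le N _

theorem variance_diagonal_general {N : ℕ} (hN : 0 < N) {r : ℝ} (hr : 0 < r) (a : ℝ) :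
    |∫ y in {y : ℝ | r / (N : ℝ) ≤ |a - y|}, kerL N y y / ((N : ℝ) * |a - y| ^ 2)| ≤
      2 * √2 / r := by
  calc |∫ y in {y : ℝ | r / (N : ℝ) ≤ |a - y|}, kerL N y y / ((N : ℝ) * |a - y| ^ 2)|
      = |∫ y in {y : ℝ | r / (N : ℝ) ≤ |a - y|}, kerL N y y / |a - y| ^ 2| / N := by
        simp only [mul_comm (N : ℝ), ← div_div, integral_div, abs_div, Nat.abs_cast]
    _ ≤ 2 * √2 / (r / N) / N := by
        gcongr
        exact abs_setIntegral_div_abs_sub_sq_le (abs_kerL_self_le N) (by positivity) a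
    _ = 2 * √2 / r := by field_simp

/-- Variance estimate, diagonal part (Lemma 4.6, first part). -/
theorem variance_diagonal (θ : ℝ) (hθ1 : -Real.sqrt 2 < θ) (hθ2 : θ < Real.sqrt 2)
    (R : ℕ) (hR : 1 ≤ R) :
    ∀ ε : ℝ, 0 < ε → ∃ r0 : ℝ, ∀ r : ℝ, r0 ≤ r → ∃ N0 : ℕ, ∀ N : ℕ, N0 ≤ N →
      ∀ x : ℝ, |x| < (R : ℝ) →
      (∫ y in {y : ℝ | r / (N : ℝ) ≤ |x / (N : ℝ) + θ - y|},
          kerL N y y / ((N : ℝ) * |x / (N : ℝ) + θ - y| ^ 2)) < ε := by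
  intro ε hε
  obtain ⟨r₀, hr₀⟩ := eventually_atTop.1 ((eventually_gt_atTop 0).and
    ((tendsto_const_nhds.div_atTop tendsto_id).eventually_lt_const hε))
  exact ⟨r₀, fun r hr => ⟨1, fun N hN x _ => (le_abs_self _).trans_lt
    ((variance_diagonal_general hN (hr₀ r hr).1 _).trans_lt (hr₀ r hr).2)⟩⟩
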